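/- Let β ∈ [1,2), (c,b) ∈ C(β), and ε > 0. Then there exist K ∈ ℕ and a K-feasible pair (c̃,b) ∈ C^{≤K}(β) such that for every sequence α̃ : ℕ → [0,1] with ∑_{i=0}^∞ α̃_i·c̃_i/2^i = 1/(β·2^{b+1}) there exists a sequence α : ℕ → [0,1] with ∑_{i=0}^∞ α_i·c_i/2^i = 1/(β·2^{b+1}) and |P(c̃,α̃) − P(c,α)| ≤ ε. -/

import Mathlib

/-- The binary entropy function, `h(p) = p log₂(1/p) + (1-p) log₂(1/(1-p))`,
with the convention `h(0) = h(1) = 0` (automatic since `1/0 = 0` and `logb 2 0 = 0`). -/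
noncomputable def binH (p : ℝ) : ℝ :=
  p * Real.logb 2 (1 / p) + (1 - p) * Real.logb 2 (1 / (1 - p))

/-- `(c, b) ∈ C(β)`: `c : ℕ → [0,1]`, `∑ cᵢ/2ⁱ = 1/(β·2ᵇ)` and `∑ cᵢ ≤ 1`
(the latter expressed via partial sums, which is equivalent for nonnegative terms). -/
def memC (β : ℝ) (c : ℕ → ℝ) (b : ℕ) : Prop :=
  (∀ i, c i ∈ Set.Icc (0 : ℝ) 1) ∧
  (∑' i : ℕ, c i / 2 ^ i) = 1 / (β * 2 ^ b) ∧
  ∀ n : ℕ, (∑ i ∈ Finset.range n, c i) ≤ 1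

/-- `α ∈ A(c,b)`: `α : ℕ → [0,1]` with `∑ αᵢ cᵢ / 2ⁱ = 1/(β·2^{b+1})`. -/
def memA (β : ℝ) (b : ℕ) (c α : ℕ → ℝ) : Prop :=
  (∀ i, α i ∈ Set.Icc (0 : ℝ) 1) ∧
  (∑' i : ℕ, α i * c i / 2 ^ i) = 1 / (β * 2 ^ (b + 1))

/-- `P(c,α) = ∑ h(αᵢ)·cᵢ − h(∑ αᵢ·cᵢ)`. -/
noncomputable def Pfun (c α : ℕ → ℝ) : ℝ :=
  (∑' i : ℕ, binH (α i) * c i) - binH (∑' i : ℕ, α i * c i)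

/-- `sup_{α ∈ A(c,b)} P(c,α)`. -/
noncomputable def supP (β : ℝ) (b : ℕ) (c : ℕ → ℝ) : ℝ :=
  sSup {y | ∃ α, memA β b c α ∧ y = Pfun c α}

/-- `G(β) = inf_{(c,b) ∈ C(β)} sup_{α ∈ A(c,b)} P(c,α)`. -/
noncomputable def Gfun (β : ℝ) : ℝ :=
  sInf {y | ∃ c b, memC β c b ∧ y = supP β b c}

/-- `(c,b)` is `k`-feasible: `cᵢ · β · 2ᵏ ∈ ℕ` for every `i`. -/
def kFeasC (β : ℝ) (k : ℕ) (c : ℕ → ℝ) : Prop :=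
  ∀ i, ∃ m : ℕ, c i * (β * 2 ^ k) = m

/-- `α` is `k`-feasible (for `c`): `αᵢ · cᵢ · β · 2ᵏ ∈ ℕ` for every `i`, and if there is
a largest index `t` with `c t > 0` then `α t < 1`. -/
def kFeasA (β : ℝ) (k : ℕ) (c α : ℕ → ℝ) : Prop :=
  (∀ i, ∃ m : ℕ, α i * c i * (β * 2 ^ k) = m) ∧
  (∀ t, 0 < c t → (∀ i, t < i → c i = 0) → α t < 1)

/-! Round every `c i` with `i ≤ k` down to the grid `ℕ / (β 2ᵏ)` and discard the others. As `k → ∞`,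
the rounded sequence converges to `c` in `ℓ¹` by dominated convergence. The loss in the sum
`∑ cᵢ / 2ⁱ = 1 / (β 2ᵇ)` is again a multiple of `1 / (β 2ᴷ)`, with `K = k + k + b`, so adding it to
`c 0`, whose coefficient in this sum is `1`, gives a `K`-feasible `c̃ ∈ C(β)` close to `c` in `ℓ¹`.

A sequence `α̃ ∈ A(c̃, b)` then selects almost half of the weight `∑ cᵢ / 2ⁱ`. Moving `α̃` slightly
towards the constant `0` or `1` makes it exactly half, and this `α` is uniformly close to `α̃`.
Finally, `P` is uniformly continuous for the `ℓ¹` norm in `c` and the sup norm in `α`, because `h`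
is uniformly continuous on `[0, 1]`.
-/

open Filter Set Topology

section WeightedSums

variable {ι : Type*} {x y u v : ι → ℝ} {B t : ℝ}

theorem abs_le_one_of_mem_Icc_zero_one {p : ℝ} (hp : p ∈ Icc (0 : ℝ) 1) : |p| ≤ 1 :=
  (abs_of_nonneg hp.1).trans_le hp.2

theorem summable_mul_of_abs_le (hx : ∀ i, |x i| ≤ B) (hv : Summable v) :
    Summable fun i ↦ x i * v i := by
  refine .of_norm_bounded (hv.abs.mul_left B) fun i ↦ ?_
  rw [Real.norm_eq_abs, abs_mul]
  exact mul_le_mul_of_nonneg_right (hx i) (abs_nonneg _)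

theorem summable_div_two_pow {v : ℕ → ℝ} (hv : Summable v) : Summable fun i ↦ v i / 2 ^ i := by
  refine .of_norm_bounded hv.abs fun i ↦ ?_
  rw [Real.norm_eq_abs, abs_div, abs_of_pos (by positivity : (0 : ℝ) < 2 ^ i)]
  exact div_le_self (abs_nonneg _) (one_le_pow₀ one_le_two)

theorem abs_tsum_mul_sub_tsum_mul_le (hx : ∀ i, |x i| ≤ B) (hxy : ∀ i, |x i - y i| ≤ t)
    (hu : Summable u) (hv : Summable v) (hv₀ : ∀ i, 0 ≤ v i) :
    |∑' i, x i * u i - ∑' i, y i * v i| ≤ B * ∑' i, |u i - v i| + t * ∑' i, v i := by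
  have hsub : Summable fun i ↦ |u i - v i| := (hu.sub hv).abs
  have hy : ∀ i, |y i| ≤ B + t := fun i ↦ by
    rw [← sub_sub_cancel (x i) (y i)]
    exact (abs_sub _ _).trans (add_le_add (hx i) (hxy i))
  have hterm : ∀ i, ‖x i * u i - y i * v i‖ ≤ B * |u i - v i| + t * v i := fun i ↦
    calc |x i * u i - y i * v i| = |x i * (u i - v i) + (x i - y i) * v i| := by ring_nf
      _ ≤ |x i| * |u i - v i| + |x i - y i| * v i := by
        grw [abs_add_le, abs_mul, abs_mul, abs_of_nonneg (hv₀ i)]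
      _ ≤ B * |u i - v i| + t * v i := by
        gcongr
        exacts [hx i, hv₀ i, hxy i]
  rw [← (summable_mul_of_abs_le hx hu).tsum_sub (summable_mul_of_abs_le hy hv)]
  exact tsum_of_norm_bounded ((hsub.hasSum.mul_left B).add (hv.hasSum.mul_left t)) hterm

end WeightedSums

section Selection

theorem exists_convexCombination_eq {S T s m η : ℝ} (hm : 0 < m) (hms : m ≤ s) (hsS : s + m ≤ S)
    (hη : |T - s| ≤ η) :
    ∃ e ∈ Icc (0 : ℝ) 1, ∃ t ∈ Icc (0 : ℝ) 1, t ≤ η / m ∧ (1 - t) * T + t * (e * S) = s := by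
  rw [abs_le] at hη
  rcases le_total s T with hsT | hTs
  · have hT : 0 < T := by linarith
    refine ⟨0, by simp, (T - s) / T, ⟨div_nonneg (by linarith) hT.le, ?_⟩, ?_, ?_⟩
    · exact div_le_one_of_le₀ (by linarith) hT.le
    · exact div_le_div₀ (by linarith) hη.2 hm (by linarith)
    · field_simp
      ring
  · have hST : 0 < S - T := by linarith
    refine ⟨1, by simp, (s - T) / (S - T), ⟨div_nonneg (by linarith) hST.le, ?_⟩, ?_, ?_⟩
    · exact div_le_one_of_le₀ (by linarith) hST.le
    · exact div_le_div₀ (by linarith) (by linarith) hm (by linarith)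
    · field_simp
      ring

theorem exists_near_tsum_mul_eq {ι : Type*} {w a : ι → ℝ} {s m η : ℝ} (hw : Summable w)
    (ha : ∀ i, a i ∈ Icc (0 : ℝ) 1) (hm : 0 < m) (hms : m ≤ s) (hs : s + m ≤ ∑' i, w i)
    (hη : |∑' i, a i * w i - s| ≤ η) :
    ∃ α : ι → ℝ, (∀ i, α i ∈ Icc (0 : ℝ) 1) ∧ ∑' i, α i * w i = s ∧
      ∀ i, |a i - α i| ≤ η / m := by
  obtain ⟨e, he, t, ht, htη, hmix⟩ := exists_convexCombination_eq hm hms hs hη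
  have haw : Summable fun i ↦ a i * w i :=
    summable_mul_of_abs_le (fun i ↦ abs_le_one_of_mem_Icc_zero_one (ha i)) hw
  refine ⟨fun i ↦ (1 - t) * a i + t * e, fun i ↦ ?_, ?_, fun i ↦ ?_⟩
  · exact convex_Icc (0 : ℝ) 1 (ha i) he (sub_nonneg.2 ht.2) ht.1 (sub_add_cancel 1 t)
  · calc ∑' i, ((1 - t) * a i + t * e) * w i = ∑' i, ((1 - t) * (a i * w i) + t * (e * w i)) :=
          tsum_congr fun i ↦ by ring
      _ = (1 - t) * ∑' i, a i * w i + t * (e * ∑' i, w i) := by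
          rw [(haw.mul_left _).tsum_add ((hw.mul_left e).mul_left t), tsum_mul_left, tsum_mul_left,
            tsum_mul_left]
      _ = s := hmix
  · calc |a i - ((1 - t) * a i + t * e)| = t * |a i - e| := by
          rw [← abs_of_nonneg ht.1, ← abs_mul, abs_of_nonneg ht.1]
          ring_nf
      _ ≤ t := mul_le_of_le_one_right ht.1 (Real.dist_le_of_mem_Icc_01 (ha i) he)
      _ ≤ η / m := htη

end Selection

section Subprobability

/-- A sub-probability vector: nonnegative weights of total mass at most `1`. This is the part of
membership in `C(β)` on which the continuity of `P` depends. -/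
structure IsSubprobability {ι : Type*} (c : ι → ℝ) : Prop where
  nonneg : ∀ i, 0 ≤ c i
  summable : Summable c
  tsum_le_one : ∑' i, c i ≤ 1

theorem memC.isSubprobability {β : ℝ} {c : ℕ → ℝ} {b : ℕ} (hC : memC β c b) :
    IsSubprobability c where
  nonneg i := (hC.1 i).1
  summable := summable_of_sum_range_le (fun i ↦ (hC.1 i).1) hC.2.2
  tsum_le_one := Real.tsum_le_of_sum_range_le (fun i ↦ (hC.1 i).1) hC.2.2

namespace IsSubprobability

variable {ι : Type*} {c c' x y : ι → ℝ} {t : ℝ}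

theorem tsum_mul_mem_Icc (hc : IsSubprobability c) (hx : ∀ i, x i ∈ Icc (0 : ℝ) 1) :
    ∑' i, x i * c i ∈ Icc (0 : ℝ) 1 := by
  have hxc : Summable fun i ↦ x i * c i :=
    summable_mul_of_abs_le (fun i ↦ abs_le_one_of_mem_Icc_zero_one (hx i)) hc.summable
  refine ⟨tsum_nonneg fun i ↦ mul_nonneg (hx i).1 (hc.nonneg i), ?_⟩
  calc ∑' i, x i * c i ≤ ∑' i, c i :=
        hxc.tsum_le_tsum (fun i ↦ mul_le_of_le_one_left (hc.nonneg i) (hx i).2) hc.summable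
    _ ≤ 1 := hc.tsum_le_one

theorem abs_tsum_sub_tsum_le (hc' : IsSubprobability c') (hc : Summable c) (ht : 0 ≤ t)
    (hx : ∀ i, |x i| ≤ 1) (hxy : ∀ i, |x i - y i| ≤ t) :
    |∑' i, x i * c i - ∑' i, y i * c' i| ≤ ∑' i, |c i - c' i| + t := by
  grw [abs_tsum_mul_sub_tsum_mul_le hx hxy hc hc'.summable hc'.nonneg, hc'.tsum_le_one,
    one_mul, mul_one]

end IsSubprobability

end Subprobability

section Entropy

theorem binH_eq_binEntropy_div (p : ℝ) : binH p = Real.binEntropy p / Real.log 2 := by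
  simp only [binH, Real.binEntropy, Real.logb, one_div]
  ring

theorem continuous_binH : Continuous binH := by
  rw [funext binH_eq_binEntropy_div]
  exact Real.binEntropy_continuous.div_const _

theorem binH_mem_Icc {p : ℝ} (hp : p ∈ Icc (0 : ℝ) 1) : binH p ∈ Icc (0 : ℝ) 1 := by
  have hlog : 0 < Real.log 2 := Real.log_pos one_lt_two
  rw [binH_eq_binEntropy_div]
  exact ⟨div_nonneg (Real.binEntropy_nonneg hp.1 hp.2) hlog.le,
    div_le_one_of_le₀ Real.binEntropy_le_log_two hlog.le⟩

theorem exists_Pfun_modulus {ε : ℝ} (hε : 0 < ε) :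
    ∃ δ > 0, ∀ {c c' α α' : ℕ → ℝ}, IsSubprobability c → IsSubprobability c' →
      (∀ i, α i ∈ Icc (0 : ℝ) 1) → (∀ i, α' i ∈ Icc (0 : ℝ) 1) →
      ∑' i, |c i - c' i| ≤ δ → (∀ i, |α i - α' i| ≤ δ) → |Pfun c α - Pfun c' α'| ≤ ε := by
  obtain ⟨δ, hδ, hmod⟩ := Metric.uniformContinuousOn_iff_le.1
    (isCompact_Icc.uniformContinuousOn_of_continuous continuous_binH.continuousOn) (ε / 3)
    (by positivity)
  refine ⟨min (ε / 3) (δ / 2), by positivity, fun {c c' α α'} hc hc' hα hα' hcc' hαα' ↦ ?_⟩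
  obtain ⟨hcε, hcδ⟩ := le_min_iff.1 hcc'
  have hαδ : ∀ i, |α i - α' i| ≤ δ / 2 := fun i ↦ (hαα' i).trans (min_le_right _ _)
  have hbinH : ∀ i, |binH (α i) - binH (α' i)| ≤ ε / 3 := fun i ↦
    hmod _ (hα i) _ (hα' i) ((hαδ i).trans (half_le_self hδ.le))
  have hmean : |∑' i, binH (α i) * c i - ∑' i, binH (α' i) * c' i| ≤ ε / 3 + ε / 3 := by
    grw [hc'.abs_tsum_sub_tsum_le hc.summable (by positivity)
      (fun i ↦ abs_le_one_of_mem_Icc_zero_one (binH_mem_Icc (hα i))) hbinH, hcε]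
  have hmass : |∑' i, α i * c i - ∑' i, α' i * c' i| ≤ δ := by
    grw [hc'.abs_tsum_sub_tsum_le hc.summable (by positivity)
      (fun i ↦ abs_le_one_of_mem_Icc_zero_one (hα i)) hαδ, hcδ, add_halves]
  calc |Pfun c α - Pfun c' α'|
      = |(∑' i, binH (α i) * c i - ∑' i, binH (α' i) * c' i) -
          (binH (∑' i, α i * c i) - binH (∑' i, α' i * c' i))| := by
        simp only [Pfun, sub_sub_sub_comm]
    _ ≤ (ε / 3 + ε / 3) + ε / 3 := (abs_sub _ _).trans <| add_le_add hmean <|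
        hmod _ (hc.tsum_mul_mem_Icc hα) _ (hc'.tsum_mul_mem_Icc hα') hmass
    _ = ε := add_thirds ε

end Entropy

section Feasibility

variable {β : ℝ} {c : ℕ → ℝ} {k l : ℕ}

theorem kFeasC.mono (hc : kFeasC β k c) (hkl : k ≤ l) : kFeasC β l c := fun i ↦ by
  obtain ⟨m, hm⟩ := hc i
  obtain ⟨j, rfl⟩ := Nat.exists_eq_add_of_le hkl
  refine ⟨m * 2 ^ j, ?_⟩
  push_cast
  rw [← hm]
  ring

theorem kFeasC.exists_tsum_div_two_pow_mul_eq (hc : kFeasC β k c) (hsupp : ∀ i, l < i → c i = 0) :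
    ∃ m : ℕ, (∑' i, c i / 2 ^ i) * (β * 2 ^ (k + l)) = m := by
  choose m hm using hc
  have hzero : ∀ i ∉ Finset.range (l + 1), c i / 2 ^ i = 0 := fun i hi ↦ by
    rw [hsupp i (by simpa using hi), zero_div]
  refine ⟨∑ i ∈ Finset.range (l + 1), m i * 2 ^ (l - i), ?_⟩
  rw [tsum_eq_sum hzero, Finset.sum_mul]
  push_cast
  refine Finset.sum_congr rfl fun i hi ↦ ?_
  obtain ⟨j, rfl⟩ := Nat.exists_eq_add_of_le (Finset.mem_range_succ_iff.1 hi)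
  rw [← hm, Nat.add_sub_cancel_left, pow_add, pow_add]
  field_simp

end Feasibility

section RoundDown

variable {β : ℝ} {c : ℕ → ℝ} {i k : ℕ}

/-- For `β > 0` and `c ≥ 0`, the largest `k`-feasible sequence below `c` that vanishes beyond the
index `k`. -/
noncomputable def roundDown (β : ℝ) (k : ℕ) (c : ℕ → ℝ) (i : ℕ) : ℝ :=
  if i ≤ k then ⌊c i * (β * 2 ^ k)⌋₊ / (β * 2 ^ k) else 0

theorem roundDown_of_le (hi : i ≤ k) :
    roundDown β k c i = ⌊c i * (β * 2 ^ k)⌋₊ / (β * 2 ^ k) :=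
  if_pos hi

theorem roundDown_of_lt (hi : k < i) : roundDown β k c i = 0 :=
  if_neg hi.not_ge

theorem kFeasC_roundDown (hβ : 0 < β) : kFeasC β k (roundDown β k c) := fun i ↦ by
  rcases le_or_gt i k with hi | hi
  · exact ⟨_, by rw [roundDown_of_le hi, div_mul_cancel₀ _ (by positivity)]⟩
  · exact ⟨0, by simp [roundDown_of_lt hi]⟩

theorem roundDown_nonneg (hβ : 0 < β) : 0 ≤ roundDown β k c := fun i ↦ by
  rw [roundDown]
  split_ifs <;> positivity

theorem roundDown_le (hβ : 0 < β) (hc : 0 ≤ c) : roundDown β k c ≤ c := fun i ↦ by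
  rcases le_or_gt i k with hi | hi
  · rw [roundDown_of_le hi, div_le_iff₀ (by positivity)]
    exact Nat.floor_le (mul_nonneg (hc i) (by positivity))
  · exact (roundDown_of_lt hi).trans_le (hc i)

theorem tendsto_roundDown (hβ : 0 < β) (hc : 0 ≤ c) (i : ℕ) :
    Tendsto (fun k ↦ roundDown β k c i) atTop (𝓝 (c i)) := by
  have hgrid : Tendsto (fun k : ℕ ↦ β * 2 ^ k) atTop atTop :=
    (tendsto_pow_atTop_atTop_of_one_lt one_lt_two).const_mul_atTop hβ
  refine ((tendsto_nat_floor_mul_div_atTop (hc i)).comp hgrid).congr' ?_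
  filter_upwards [eventually_ge_atTop i] with k hk
  exact (roundDown_of_le hk).symm

theorem tendsto_tsum_sub_roundDown (hβ : 0 < β) (hc : 0 ≤ c) (hsum : Summable c) :
    Tendsto (fun k ↦ ∑' i, (c i - roundDown β k c i)) atTop (𝓝 0) := by
  have hpoint : ∀ i, Tendsto (fun k ↦ c i - roundDown β k c i) atTop (𝓝 0) := fun i ↦ by
    simpa using (tendsto_roundDown hβ hc i).const_sub (c i)
  have hdom : ∀ k i, ‖c i - roundDown β k c i‖ ≤ c i := fun k i ↦ by
    rw [Real.norm_of_nonneg (sub_nonneg.2 (roundDown_le hβ hc i))]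
    exact sub_le_self _ (roundDown_nonneg hβ i)
  simpa using tendsto_tsum_of_dominated_convergence hsum hpoint (.of_forall hdom)

end RoundDown

section Rebalance

variable {β : ℝ} {b k l : ℕ} {c f : ℕ → ℝ}

/-- The part of the sum `∑ cᵢ / 2ⁱ` that is lost when `c` is replaced by `f`. -/
noncomputable def dyadicDeficit (c f : ℕ → ℝ) : ℝ :=
  ∑' i, (c i - f i) / 2 ^ i

/-- The sequence `f` corrected at index `0` so that the sum `∑ fᵢ / 2ⁱ` becomes that of `c`. -/
noncomputable def rebalance (c f : ℕ → ℝ) : ℕ → ℝ :=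
  f + Pi.single 0 (dyadicDeficit c f)

theorem dyadicDeficit_eq_sub (hc : Summable c) (hf : Summable f) :
    dyadicDeficit c f = ∑' i, c i / 2 ^ i - ∑' i, f i / 2 ^ i := by
  simp only [dyadicDeficit, sub_div,
    (summable_div_two_pow hc).tsum_sub (summable_div_two_pow hf)]

theorem dyadicDeficit_nonneg (hfc : f ≤ c) : 0 ≤ dyadicDeficit c f :=
  tsum_nonneg fun i ↦ div_nonneg (sub_nonneg.2 (hfc i)) (by positivity)

theorem dyadicDeficit_le_tsum_sub (hc : Summable c) (hf : Summable f) (hfc : f ≤ c) :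
    dyadicDeficit c f ≤ ∑' i, (c i - f i) :=
  (summable_div_two_pow (hc.sub hf)).tsum_le_tsum
    (fun i ↦ div_le_self (sub_nonneg.2 (hfc i)) (one_le_pow₀ one_le_two)) (hc.sub hf)

theorem rebalance_of_ne_zero {i : ℕ} (hi : i ≠ 0) : rebalance c f i = f i := by
  simp [rebalance, hi]

theorem le_rebalance (hfc : f ≤ c) : f ≤ rebalance c f :=
  le_add_of_nonneg_right (Pi.single_nonneg.2 (dyadicDeficit_nonneg hfc))

theorem hasSum_rebalance (hf : Summable f) :
    HasSum (rebalance c f) (∑' i, f i + dyadicDeficit c f) :=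
  hf.hasSum.add (hasSum_pi_single 0 _)

theorem tsum_rebalance_div_two_pow (hc : Summable c) (hf : Summable f) :
    ∑' i, rebalance c f i / 2 ^ i = ∑' i, c i / 2 ^ i := by
  have hsingle : HasSum (fun i ↦ (Pi.single 0 (dyadicDeficit c f) : ℕ → ℝ) i / 2 ^ i)
      (dyadicDeficit c f) := by
    convert hasSum_single 0 fun i hi ↦ ?_ using 1
    · simp
    · simp [hi]
  have hsum := (summable_div_two_pow hf).hasSum.add hsingle
  simpa only [rebalance, Pi.add_apply, add_div, dyadicDeficit_eq_sub hc hf, add_sub_cancel]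
    using hsum.tsum_eq

theorem memC_rebalance (hC : memC β c b) (hf : 0 ≤ f) (hfc : f ≤ c) :
    memC β (rebalance c f) b := by
  have hc := hC.isSubprobability
  have hfs : Summable f := .of_nonneg_of_le hf hfc hc.summable
  have hnonneg : 0 ≤ rebalance c f := hf.trans (le_rebalance hfc)
  have hsum := hasSum_rebalance (c := c) hfs
  have hmass : ∑' i, f i + dyadicDeficit c f ≤ 1 := by
    grw [dyadicDeficit_le_tsum_sub hc.summable hfs hfc, hc.summable.tsum_sub hfs, add_sub_cancel,
      hc.tsum_le_one]
  refine ⟨fun i ↦ ⟨hnonneg i, ?_⟩, ?_, fun n ↦ ?_⟩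
  · exact (le_hasSum hsum i fun j _ ↦ hnonneg j).trans hmass
  · rw [tsum_rebalance_div_two_pow hc.summable hfs, hC.2.1]
  · exact (sum_le_hasSum _ (fun i _ ↦ hnonneg i) hsum).trans hmass

theorem kFeasC.exists_dyadicDeficit_mul_eq (hf : kFeasC β k f) (hβ : 0 < β) (hC : memC β c b)
    (hfc : f ≤ c) (hsupp : ∀ i, l < i → f i = 0) :
    ∃ m : ℕ, dyadicDeficit c f * (β * 2 ^ (k + l + b)) = m := by
  have hfs : Summable f :=
    summable_of_ne_finset_zero (s := Finset.range (l + 1)) fun i hi ↦ hsupp i (by simpa using hi)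
  obtain ⟨n, hn⟩ := hf.exists_tsum_div_two_pow_mul_eq hsupp
  have hint : dyadicDeficit c f * (β * 2 ^ (k + l + b)) = 2 ^ (k + l) - n * 2 ^ b := by
    rw [dyadicDeficit_eq_sub hC.isSubprobability.summable hfs, hC.2.1, ← hn, pow_add _ (k + l)]
    field_simp
  have hle : n * 2 ^ b ≤ 2 ^ (k + l) := by
    have hnonneg : (0 : ℝ) ≤ 2 ^ (k + l) - n * 2 ^ b :=
      hint ▸ mul_nonneg (dyadicDeficit_nonneg hfc) (by positivity)
    exact_mod_cast sub_nonneg.1 hnonneg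
  exact ⟨2 ^ (k + l) - n * 2 ^ b, by rw [hint]; push_cast [hle]; rfl⟩

theorem kFeasC_rebalance (hf : kFeasC β k f) (hβ : 0 < β) (hC : memC β c b) (hfc : f ≤ c)
    (hsupp : ∀ i, l < i → f i = 0) : kFeasC β (k + l + b) (rebalance c f) := by
  intro i
  obtain ⟨m, hm⟩ := hf.mono (show k ≤ k + l + b by omega) i
  rcases eq_or_ne i 0 with rfl | hi
  · obtain ⟨n, hn⟩ := hf.exists_dyadicDeficit_mul_eq hβ hC hfc hsupp
    exact ⟨m + n, by simp [rebalance, add_mul, hm, hn]⟩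
  · exact ⟨m, by rw [rebalance_of_ne_zero hi, hm]⟩

theorem tsum_abs_rebalance_sub_le (hc : Summable c) (hf : Summable f) (hfc : f ≤ c) :
    ∑' i, |rebalance c f i - c i| ≤ 2 * ∑' i, (c i - f i) := by
  have hval : ∀ i, rebalance c f i = f i + (Pi.single 0 (dyadicDeficit c f) : ℕ → ℝ) i :=
    fun _ ↦ rfl
  have hsum := (hc.sub hf).hasSum.add (hasSum_pi_single 0 (dyadicDeficit c f))
  calc ∑' i, |rebalance c f i - c i|
      ≤ ∑' i, (c i - f i + (Pi.single 0 (dyadicDeficit c f) : ℕ → ℝ) i) := by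
        refine ((hasSum_rebalance hf).summable.sub hc).abs.tsum_le_tsum (fun i ↦ ?_) hsum.summable
        rw [abs_le]
        constructor <;> linarith [hfc i, hval i, le_rebalance hfc i]
    _ = ∑' i, (c i - f i) + dyadicDeficit c f := hsum.tsum_eq
    _ ≤ 2 * ∑' i, (c i - f i) := by
        grw [dyadicDeficit_le_tsum_sub hc hf hfc, two_mul]

end Rebalance

section Approximation

variable {β ε η : ℝ} {b : ℕ} {c ct αt : ℕ → ℝ}

theorem memC.exists_feasible_near (hβ : 0 < β) (hC : memC β c b) (hη : 0 < η) :
    ∃ K : ℕ, ∃ ct : ℕ → ℝ, memC β ct b ∧ (∀ i, K < i → ct i = 0) ∧ kFeasC β K ct ∧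
      ∑' i, |ct i - c i| ≤ η := by
  have hc := hC.isSubprobability
  obtain ⟨k, hk⟩ := ((tendsto_tsum_sub_roundDown hβ hc.nonneg hc.summable).eventually_lt_const
    (half_pos hη)).exists
  have hnonneg := roundDown_nonneg (c := c) (k := k) hβ
  have hle := roundDown_le (k := k) hβ hc.nonneg
  have hsum : Summable (roundDown β k c) := .of_nonneg_of_le hnonneg hle hc.summable
  refine ⟨k + k + b, rebalance c (roundDown β k c), memC_rebalance hC hnonneg hle, fun i hi ↦ ?_,
    kFeasC_rebalance (kFeasC_roundDown hβ) hβ hC hle fun _ ↦ roundDown_of_lt, ?_⟩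
  · rw [rebalance_of_ne_zero (by omega), roundDown_of_lt (by omega)]
  · linarith [tsum_abs_rebalance_sub_le hc.summable hsum hle]

theorem memA.exists_near (hβ : 0 < β) (hC : memC β c b) (hct : Summable ct)
    (hαt : memA β b ct αt) (hη : ∑' i, |ct i - c i| ≤ η) :
    ∃ α, memA β b c α ∧ ∀ i, |αt i - α i| ≤ η * (β * 2 ^ (b + 1)) := by
  have hc := hC.isSubprobability
  have hfactor : ∀ i, |αt i / 2 ^ i| ≤ 1 := fun i ↦ abs_le_one_of_mem_Icc_zero_one
    ⟨div_nonneg (hαt.1 i).1 (by positivity),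
      div_le_one_of_le₀ ((hαt.1 i).2.trans (one_le_pow₀ one_le_two)) (by positivity)⟩
  have hloss : |∑' i, αt i / 2 ^ i * ct i - ∑' i, αt i / 2 ^ i * c i| ≤ ∑' i, |ct i - c i| + 0 :=
    hc.abs_tsum_sub_tsum_le hct le_rfl hfactor (by simp)
  have hweight : |∑' i, αt i * (c i / 2 ^ i) - 1 / (β * 2 ^ (b + 1))| ≤ η := by
    rw [← hαt.2, abs_sub_comm]
    simp only [add_zero, div_mul_eq_mul_div] at hloss
    simpa only [← mul_div_assoc] using hloss.trans hη
  have hhalf : 1 / (β * 2 ^ (b + 1)) + 1 / (β * 2 ^ (b + 1)) ≤ ∑' i, c i / 2 ^ i := by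
    rw [hC.2.1, pow_succ]
    apply le_of_eq
    field_simp
    norm_num
  obtain ⟨α, hα, hsum, hnear⟩ := exists_near_tsum_mul_eq (summable_div_two_pow hc.summable) hαt.1
    (by positivity) le_rfl hhalf hweight
  exact ⟨α, ⟨hα, by simpa only [mul_div_assoc] using hsum⟩,
    by simpa only [div_div_eq_mul_div, div_one] using hnear⟩

theorem approx_by_feasible_c_general (hβ : 0 < β) (hC : memC β c b) (hε : 0 < ε) :
    ∃ K : ℕ, ∃ ct : ℕ → ℝ, memC β ct b ∧ (∀ i, K < i → ct i = 0) ∧ kFeasC β K ct ∧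
      ∀ αt : ℕ → ℝ, memA β b ct αt → ∃ α : ℕ → ℝ, memA β b c α ∧ |Pfun ct αt - Pfun c α| ≤ ε := by
  obtain ⟨δ, hδ, hP⟩ := exists_Pfun_modulus hε
  obtain ⟨η, hη, hηδ⟩ : ∃ η > 0, η * (1 + β * 2 ^ (b + 1)) = δ :=
    ⟨δ / (1 + β * 2 ^ (b + 1)), by positivity, div_mul_cancel₀ _ (by positivity)⟩
  have hηα : 0 < η * (β * 2 ^ (b + 1)) := by positivity
  obtain ⟨K, ct, hCt, hsupp, hfeas, hdist⟩ := hC.exists_feasible_near hβ hη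
  refine ⟨K, ct, hCt, hsupp, hfeas, fun αt hαt ↦ ?_⟩
  have hct := hCt.isSubprobability
  obtain ⟨α, hα, hnear⟩ := hαt.exists_near hβ hC hct.summable hdist
  exact ⟨α, hα, hP hct hC.isSubprobability hαt.1 hα.1 (by linarith) fun i ↦ by linarith [hnear i]⟩

end Approximation

/-- Any `(c,b) ∈ C(β)` can be replaced by a `K`-feasible `(c̃,b) ∈ C^{≤K}(β)` such that
every feasible `α̃` for `c̃` has a matching feasible `α` for `c` with close `P`-value. -/
theorem approx_by_feasible_c (β : ℝ) (hβ : β ∈ Set.Ico (1 : ℝ) 2)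
    (c : ℕ → ℝ) (b : ℕ) (hC : memC β c b) (ε : ℝ) (hε : 0 < ε) :
    ∃ K : ℕ, ∃ ct : ℕ → ℝ, memC β ct b ∧ (∀ i, K < i → ct i = 0) ∧ kFeasC β K ct ∧
      ∀ αt : ℕ → ℝ, (∀ i, αt i ∈ Set.Icc (0 : ℝ) 1) →
        (∑' i : ℕ, αt i * ct i / 2 ^ i) = 1 / (β * 2 ^ (b + 1)) →
        ∃ α : ℕ → ℝ, (∀ i, α i ∈ Set.Icc (0 : ℝ) 1) ∧
          (∑' i : ℕ, α i * c i / 2 ^ i) = 1 / (β * 2 ^ (b + 1)) ∧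
          |Pfun ct αt - Pfun c α| ≤ ε := by
  obtain ⟨K, ct, hCt, hsupp, hfeas, happrox⟩ :=
    approx_by_feasible_c_general (zero_lt_one.trans_le hβ.1) hC hε
  exact ⟨K, ct, hCt, hsupp, hfeas, by simpa only [memA, and_imp, and_assoc] using happrox⟩
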